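/- Let I be a ROS-UET instance on a network G=(V,E,c,v*) with g vertices and let (T,A,D) be a pre-schedule for I. Suppose there exists a feasible schedule S* for I that is compatible with some routes (R^{q*})_{q=1}^m complying with (T,A,D). Then for every collection of routes (R^q)_{q=1}^m complying with (T,A,D), there exists a critical schedule compatible with (R^q)_{q=1}^m. -/

import Mathlib

/-- A network: a connected simple graph with positive integer travel times
and a distinguished depot vertex. -/
structure Network (V : Type*) where
  G : SimpleGraph V
  conn : G.Connected
  c : V → V → ℕ
  csymm : ∀ u v : V, c u v = c v u
  cpos : ∀ u v : V, G.Adj u v → 0 < c u v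
  depot : V

/-- A route with `s` stays; stay `k` (for `k < s`) is `(a k, v k, b k)`. -/
structure Route (V : Type*) where
  s : ℕ
  a : ℕ → ℕ
  v : ℕ → V
  b : ℕ → ℕ

/-- The length of a route: the end of its last stay. -/
def Route.length {V : Type*} (R : Route V) : ℕ := R.b (R.s - 1)

/-- `R` is a valid route in the network `N`. -/
def IsRoute {V : Type*} (N : Network V) (R : Route V) : Prop :=
  0 < R.s ∧ R.v 0 = N.depot ∧ R.v (R.s - 1) = N.depot ∧ R.a 0 = 0 ∧
    (∀ k < R.s, R.a k ≤ R.b k) ∧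
    ∀ k, k + 1 < R.s →
      N.G.Adj (R.v k) (R.v (k + 1)) ∧
      R.a (k + 1) = R.b k + N.c (R.v k) (R.v (k + 1))

/-- Routes `R` (one per machine) are compatible with the (unit execution time)
schedule `S`: each machine stays at the location of each job while processing it. -/
def Compatible {V : Type*} {n m : ℕ} (loc : Fin n → V)
    (S : Fin n → Fin m → ℕ) (R : Fin m → Route V) : Prop :=
  ∀ (i : Fin n) (q : Fin m), ∃ k < (R q).s,
    (R q).v k = loc i ∧ (R q).a k ≤ S i q ∧ S i q + 1 ≤ (R q).b k

/-- A schedule for a ROS-UET instance is feasible. -/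
def Feasible {V : Type*} {n m : ℕ} (N : Network V) (loc : Fin n → V)
    (S : Fin n → Fin m → ℕ) : Prop :=
  (∀ (i j : Fin n) (q : Fin m), i ≠ j → S i q ≠ S j q) ∧
  (∀ (i : Fin n) (q r : Fin m), q ≠ r → S i q ≠ S i r) ∧
  ∃ R : Fin m → Route V, (∀ q, IsRoute N (R q)) ∧ Compatible loc S R

/-- The makespan of a schedule: the least `L` such that there are compatible
routes, each of length at most `L`. -/
noncomputable def makespan {V : Type*} {n m : ℕ} (N : Network V) (loc : Fin n → V)
    (S : Fin n → Fin m → ℕ) : ℕ :=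
  sInf {L | ∃ R : Fin m → Route V, (∀ q, IsRoute N (R q)) ∧
    Compatible loc S R ∧ ∀ q, Route.length (R q) ≤ L}

/-- The total travel time of a walk in a graph with travel times `c`. -/
def walkWeight {V : Type*} {G : SimpleGraph V} (c : V → V → ℕ) {u w : V}
    (p : G.Walk u w) : ℕ :=
  (p.darts.map fun d => c d.toProd.1 d.toProd.2).sum

/-- A vertex is critical if it contains fewer than `m` jobs. -/
def Critical {V : Type*} [DecidableEq V] {n : ℕ} (m : ℕ) (loc : Fin n → V)
    (v : V) : Prop :=
  (Finset.univ.filter (fun i : Fin n => loc i = v)).card < m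

/-- A pre-schedule `(T, A, D)`: a sequence of `s` pre-stays, the `k`-th
(for `k < s`) being `(q k, w k)`, together with a length assignment `A`
and a displacement `D`. -/
structure PreSchedule (V : Type*) (m : ℕ) where
  s : ℕ
  q : ℕ → Fin m
  w : ℕ → V
  A : ℕ → ℕ
  D : ℕ → ℕ

/-- Well-formedness of a pre-schedule: at most `m² + (2g-3)·m` pre-stays,
`A` takes values in `{0,…,2m-1}` and `D` in `{0,…,2m}` on pre-stays in
critical vertices. -/
def IsPreSchedule {V : Type*} [Fintype V] [DecidableEq V] {n : ℕ} (m : ℕ)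
    (loc : Fin n → V) (P : PreSchedule V m) : Prop :=
  P.s ≤ m ^ 2 + (2 * Fintype.card V - 3) * m ∧
  ∀ k < P.s, Critical m loc (P.w k) → P.A k < 2 * m ∧ P.D k ≤ 2 * m

/-- `sigma P k` is the (0-based) position of the `k`-th pre-stay among the
pre-stays of machine `q k` in the pre-stay sequence. -/
def sigma {V : Type*} {m : ℕ} (P : PreSchedule V m) (k : ℕ) : ℕ :=
  ((Finset.range k).filter (fun j => P.q j = P.q k)).card

/-- Routes `(R q)` comply with the pre-schedule `P = (T, A, D)`. -/
def Comply {V : Type*} [DecidableEq V] {n : ℕ} (m : ℕ) (loc : Fin n → V)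
    (P : PreSchedule V m) (R : Fin m → Route V) : Prop :=
  (∀ mq : Fin m, (R mq).s = ((Finset.range P.s).filter (fun j => P.q j = mq)).card) ∧
  (∀ k < P.s, (R (P.q k)).v (sigma P k) = P.w k) ∧
  (∀ k ℓ, k < ℓ → ℓ < P.s →
    (R (P.q k)).a (sigma P k) ≤ (R (P.q ℓ)).a (sigma P ℓ)) ∧
  (∀ k < P.s, Critical m loc (P.w k) →
    (R (P.q k)).b (sigma P k) - (R (P.q k)).a (sigma P k) = P.A k) ∧
  (∀ k ℓ, k < ℓ → ℓ < P.s → Critical m loc (P.w k) → Critical m loc (P.w ℓ) →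
    (∀ i, k < i → i < ℓ → ¬ Critical m loc (P.w i)) →
    (P.D ℓ = 2 * m →
      (R (P.q k)).a (sigma P k) + 2 * m ≤ (R (P.q ℓ)).a (sigma P ℓ)) ∧
    (P.D ℓ < 2 * m →
      (R (P.q ℓ)).a (sigma P ℓ) = (R (P.q k)).a (sigma P k) + P.D ℓ))

/-- A critical schedule: start times for jobs in critical vertices such that
no machine processes two such jobs at once and no such job is processed by two
machines at once (values on jobs in non-critical vertices are irrelevant). -/
def IsCriticalSchedule {V : Type*} [DecidableEq V] {n m : ℕ} (loc : Fin n → V)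
    (S' : Fin n → Fin m → ℕ) : Prop :=
  (∀ (i j : Fin n) (q : Fin m), i ≠ j →
    Critical m loc (loc i) → Critical m loc (loc j) → S' i q ≠ S' j q) ∧
  (∀ (i : Fin n) (q r : Fin m), q ≠ r →
    Critical m loc (loc i) → S' i q ≠ S' i r)

/-- A critical schedule is compatible with routes `(R q)`: each machine stays
at the location of each job in a critical vertex while processing it. -/
def CriticalCompatible {V : Type*} [DecidableEq V] {n m : ℕ} (loc : Fin n → V)
    (S' : Fin n → Fin m → ℕ) (R : Fin m → Route V) : Prop :=
  ∀ (i : Fin n) (q : Fin m), Critical m loc (loc i) → ∃ k < (R q).s,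
    (R q).v k = loc i ∧ (R q).a k ≤ S' i q ∧ S' i q + 1 ≤ (R q).b k

/-!
The displacement records the gap between the arrivals of consecutive critical pre-stays, truncated
at `2 * m`, and adding up shows that the truncated gap between any two critical arrivals is the same
for all routes complying with the pre-schedule. So move every critical job along with the stay that
hosts it: critical stays keep their length, hence the job still fits, and since they last at most
`2 * m`, two operations that coincide after the move belong to stays whose arrivals are less than
`2 * m` apart; this gap was not changed, so the operations already coincided before the move.
-/

theorem lt_count_iff_exists {p : ℕ → Prop} [DecidablePred p] {s t : ℕ} :
    t < Nat.count p s ↔ ∃ k < s, p k ∧ Nat.count p k = t := by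
  constructor
  · intro ht
    have ht' : ∀ hf : (Set.ofPred p).Finite, t < hf.toFinset.card :=
      fun hf => ht.trans_le (Nat.count_le_card hf s)
    exact ⟨Nat.nth p t, Nat.nth_lt_of_lt_count ht, Nat.nth_mem t ht', Nat.count_nth ht'⟩
  · rintro ⟨k, hks, hk, rfl⟩
    exact Nat.count_strict_mono hk hks

theorem rel_of_lt_of_forall_covBy {ι : Type*} [Preorder ι] [LocallyFiniteOrder ι]
    {r : ι → ι → Prop} [IsTrans ι r] (h : ∀ k l, k ⋖ l → r k l) {k l : ι} (hkl : k < l) :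
    r k l := by
  rw [← Relation.transGen_eq_self (r := r)]
  exact Relation.TransGen.mono h _ _ (transGen_covBy_of_lt hkl)

/-- Both `f` and `g` increase from `k` to `l`, and by the same amount if amounts of at least `d`
are not told apart. For arrival times, this is what a pre-schedule determines with `d = 2 * m`. -/
def GapsAgreeUpTo {ι : Type*} (d : ℕ) (f g : ι → ℕ) (k l : ι) : Prop :=
  f k ≤ f l ∧ g k ≤ g l ∧ min d (f l - f k) = min d (g l - g k)

namespace GapsAgreeUpTo

variable {ι : Type*} {d : ℕ} {f g : ι → ℕ} {k l : ι}

instance : IsTrans ι (GapsAgreeUpTo d f g) where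
  trans _ _ _ := by
    unfold GapsAgreeUpTo
    omega

theorem add_eq_add (h : GapsAgreeUpTo d f g k l) {x y : ℕ} (hx : x < d)
    (hxy : f k + x = f l + y) : g k + x = g l + y := by
  obtain ⟨hf, hg, hgap⟩ := h
  omega

end GapsAgreeUpTo

namespace PreSchedule

variable {V : Type*} {m : ℕ}

/-- The time at which the `k`-th pre-stay begins under the routes `R`. -/
def arrival (P : PreSchedule V m) (R : Fin m → Route V) (k : ℕ) : ℕ :=
  (R (P.q k)).a (sigma P k)

/-- The time at which the `k`-th pre-stay ends under the routes `R`. -/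
def departure (P : PreSchedule V m) (R : Fin m → Route V) (k : ℕ) : ℕ :=
  (R (P.q k)).b (sigma P k)

/-- The possible start times of an operation hosted by the `k`-th pre-stay under the routes `R`.
The departure itself is excluded because operations take one unit of time. -/
def slots (P : PreSchedule V m) (R : Fin m → Route V) (k : ℕ) : Set ℕ :=
  Set.Ico (P.arrival R k) (P.departure R k)

/-- The image of time `x` when the `k`-th pre-stay is moved from its position under the routes `R`
to its position under `R'`. Meant for `x ∈ P.slots R k`, so that the subtraction does not
truncate. -/
def transport (P : PreSchedule V m) (R R' : Fin m → Route V) (k x : ℕ) : ℕ :=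
  P.arrival R' k + (x - P.arrival R k)

/-- The set `K` of indices of pre-stays in critical vertices. -/
def criticalIndices [DecidableEq V] {n : ℕ} (P : PreSchedule V m) (loc : Fin n → V) : Set ℕ :=
  {k | k < P.s ∧ Critical m loc (P.w k)}

end PreSchedule

namespace Comply

variable {V : Type*} [DecidableEq V] {n m : ℕ} {loc : Fin n → V} {P : PreSchedule V m}
  {R R' : Fin m → Route V} {k l x y : ℕ}

theorem lt_s_iff (h : Comply m loc P R) {q : Fin m} {t : ℕ} :
    t < (R q).s ↔ ∃ k < P.s, P.q k = q ∧ sigma P k = t := by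
  rw [h.1 q, ← Nat.count_eq_card_filter_range, lt_count_iff_exists]
  refine exists_congr fun k => and_congr_right fun _ => and_congr_right fun hq => ?_
  rw [sigma, hq, Nat.count_eq_card_filter_range]

theorem exists_stay_iff (h : Comply m loc P R) {q : Fin m} {v : V} :
    (∃ t < (R q).s, (R q).v t = v ∧ (R q).a t ≤ x ∧ x + 1 ≤ (R q).b t) ↔
      ∃ k < P.s, P.q k = q ∧ P.w k = v ∧ x ∈ P.slots R k := by
  constructor
  · rintro ⟨t, ht, rfl, hx⟩
    obtain ⟨k, hk, rfl, rfl⟩ := h.lt_s_iff.1 ht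
    exact ⟨k, hk, rfl, (h.2.1 k hk).symm, hx⟩
  · rintro ⟨k, hk, rfl, rfl, hx⟩
    exact ⟨sigma P k, h.lt_s_iff.2 ⟨k, hk, rfl, rfl⟩, h.2.1 k hk, hx⟩

theorem departure_sub_arrival (h : Comply m loc P R) (hk : k ∈ P.criticalIndices loc) :
    P.departure R k - P.arrival R k = P.A k :=
  h.2.2.2.1 k hk.1 hk.2

theorem min_arrival_sub_arrival_of_covBy (h : Comply m loc P R) {k l : P.criticalIndices loc}
    (hD : P.D l ≤ 2 * m) (hkl : k ⋖ l) :
    min (2 * m) (P.arrival R l - P.arrival R k) = P.D l := by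
  have hconsecutive : ∀ i, k.1 < i → i < l.1 → ¬ Critical m loc (P.w i) := fun i hki hil hi =>
    hkl.2 (c := ⟨i, hil.trans l.2.1, hi⟩) hki hil
  obtain ⟨hfar, hnear⟩ := h.2.2.2.2 k l hkl.1 l.2.1 k.2.2 l.2.2 hconsecutive
  simp only [PreSchedule.arrival]
  rcases hD.eq_or_lt with hDl | hDl
  · have := hfar hDl
    omega
  · have := hnear hDl
    omega

theorem gapsAgreeUpTo_arrival (h : Comply m loc P R) (h' : Comply m loc P R')
    (hD : ∀ l ∈ P.criticalIndices loc, P.D l ≤ 2 * m)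
    (hk : k ∈ P.criticalIndices loc) (hl : l ∈ P.criticalIndices loc) (hkl : k < l) :
    GapsAgreeUpTo (2 * m) (P.arrival R) (P.arrival R') k l := by
  classical
  let f : P.criticalIndices loc → ℕ := fun i => P.arrival R i
  let f' : P.criticalIndices loc → ℕ := fun i => P.arrival R' i
  suffices ∀ i j, i ⋖ j → GapsAgreeUpTo (2 * m) f f' i j from
    rel_of_lt_of_forall_covBy this (k := ⟨k, hk⟩) (l := ⟨l, hl⟩) hkl
  exact fun i j hij => ⟨h.2.2.1 i j hij.1 j.2.1, h'.2.2.1 i j hij.1 j.2.1,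
    (h.min_arrival_sub_arrival_of_covBy (hD j j.2) hij).trans
      (h'.min_arrival_sub_arrival_of_covBy (hD j j.2) hij).symm⟩

theorem transport_mem_slots (h : Comply m loc P R) (h' : Comply m loc P R')
    (hk : k ∈ P.criticalIndices loc) (hx : x ∈ P.slots R k) :
    P.transport R R' k x ∈ P.slots R' k := by
  have hlength := (h.departure_sub_arrival hk).trans (h'.departure_sub_arrival hk).symm
  simp only [PreSchedule.slots, Set.mem_Ico, PreSchedule.transport] at hx ⊢
  omega

theorem eq_of_transport_eq (h : Comply m loc P R) (h' : Comply m loc P R')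
    (hA : ∀ k ∈ P.criticalIndices loc, P.A k ≤ 2 * m)
    (hD : ∀ k ∈ P.criticalIndices loc, P.D k ≤ 2 * m)
    (hk : k ∈ P.criticalIndices loc) (hl : l ∈ P.criticalIndices loc)
    (hx : x ∈ P.slots R k) (hy : y ∈ P.slots R l)
    (hxy : P.transport R R' k x = P.transport R R' l y) : x = y := by
  wlog hkl : k ≤ l generalizing k l x y
  · exact (this hl hk hy hx hxy.symm (le_of_not_ge hkl)).symm
  have hlength : P.departure R k - P.arrival R k ≤ 2 * m :=
    (h.departure_sub_arrival hk).trans_le (hA k hk)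
  simp only [PreSchedule.slots, Set.mem_Ico] at hx hy
  have hback : P.arrival R k + (x - P.arrival R k) = P.arrival R l + (y - P.arrival R l) := by
    rcases hkl.eq_or_lt with rfl | hkl
    · simpa only [PreSchedule.transport, add_right_inj] using hxy
    · exact (h'.gapsAgreeUpTo_arrival h hD hk hl hkl).add_eq_add (by omega) hxy
  omega

end Comply

section

variable {V : Type*} {n m : ℕ} {loc : Fin n → V} {S : Fin n → Fin m → ℕ}

theorem Feasible.isCriticalSchedule [DecidableEq V] {N : Network V} (h : Feasible N loc S) :
    IsCriticalSchedule loc S :=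
  ⟨fun i j q hij _ _ => h.1 i j q hij, fun i q r hqr _ => h.2.1 i q r hqr⟩

theorem Compatible.criticalCompatible [DecidableEq V] {R : Fin m → Route V}
    (h : Compatible loc S R) : CriticalCompatible loc S R :=
  fun i q _ => h i q

theorem statement7_general [DecidableEq V] (P : PreSchedule V m)
    (hA : ∀ k ∈ P.criticalIndices loc, P.A k ≤ 2 * m)
    (hD : ∀ k ∈ P.criticalIndices loc, P.D k ≤ 2 * m) {R R' : Fin m → Route V}
    (hR : Comply m loc P R) (hR' : Comply m loc P R')
    (hS : IsCriticalSchedule loc S) (hSR : CriticalCompatible loc S R) :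
    ∃ S' : Fin n → Fin m → ℕ, IsCriticalSchedule loc S' ∧ CriticalCompatible loc S' R' := by
  have hhost := fun i q hi => hR.exists_stay_iff.1 (hSR i q hi)
  choose! κ hκs hκq hκw hκS using hhost
  have hκ : ∀ i q, Critical m loc (loc i) → κ i q ∈ P.criticalIndices loc := fun i q hi =>
    ⟨hκs i q hi, (hκw i q hi).symm ▸ hi⟩
  have hcoincide : ∀ i j q r, Critical m loc (loc i) → Critical m loc (loc j) →
      P.transport R R' (κ i q) (S i q) = P.transport R R' (κ j r) (S j r) → S i q = S j r :=
    fun i j q r hi hj =>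
      hR.eq_of_transport_eq hR' hA hD (hκ i q hi) (hκ j r hj) (hκS i q hi) (hκS j r hj)
  refine ⟨fun i q => P.transport R R' (κ i q) (S i q), ⟨?_, ?_⟩, fun i q hi => ?_⟩
  · exact fun i j q hij hi hj => mt (hcoincide i j q q hi hj) (hS.1 i j q hij hi hj)
  · exact fun i q r hqr hi => mt (hcoincide i i q r hi hi) (hS.2 i q r hqr hi)
  · exact hR'.exists_stay_iff.2 ⟨κ i q, hκs i q hi, hκq i q hi, hκw i q hi,
      hR.transport_mem_slots hR' (hκ i q hi) (hκS i q hi)⟩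

end

/-- If some feasible schedule `S*` is compatible with some
routes `(R* q)` complying with a pre-schedule `(T, A, D)`, then for *every*
collection of routes `(R q)` complying with `(T, A, D)` there is a critical
schedule compatible with `(R q)`. -/
theorem statement7 {V : Type*} [Fintype V] [DecidableEq V] {n m : ℕ}
    (N : Network V) (loc : Fin n → V)
    (P : PreSchedule V m) (hP : IsPreSchedule m loc P)
    (Sstar : Fin n → Fin m → ℕ) (Rstar : Fin m → Route V)
    (hfeas : Feasible N loc Sstar)
    (hRstar : ∀ q, IsRoute N (Rstar q))
    (hcomplyStar : Comply m loc P Rstar)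
    (hcompatStar : Compatible loc Sstar Rstar) :
    ∀ R : Fin m → Route V, (∀ q, IsRoute N (R q)) → Comply m loc P R →
      ∃ S' : Fin n → Fin m → ℕ,
        IsCriticalSchedule loc S' ∧ CriticalCompatible loc S' R := by
  intro R _ hcomply
  exact statement7_general P (fun k ⟨hk, hc⟩ => (hP.2 k hk hc).1.le)
    (fun k ⟨hk, hc⟩ => (hP.2 k hk hc).2) hcomplyStar hcomply hfeas.isCriticalSchedule
    hcompatStar.criticalCompatible
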